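/- Let (Ω, ℱ, P) be a probability space with a filtration (ℱ_l)_{l∈ℕ}, and let (Z_l)_{l∈ℕ} be a sequence of nonnegative integrable real random variables adapted to the filtration satisfying, for every l ≥ 1, E[Z_l ∣ ℱ_{l−1}] ≤ (1−δ)(1−ε)·Z_{l−1} + (1−δ)·ζ + δ·M almost surely, where δ, ε ∈ (0,1) and ζ, M ≥ 0. Set η = (1/ε)(ζ + δM/(1−δ)), Z_l^best = min_{k≤l} Z_k, α_l = Z_l·1{Z_l^best > η}, and β_l = (ε·Z_l − ζ − δM/(1−δ))·1{Z_l^best > η}. Then α_l ≥ 0 and β_l ≥ 0 for every l, and for every l ≥ 1, E[α_l ∣ ℱ_{l−1}] ≤ (1−δ)·(α_{l−1} − β_{l−1}) almost surely. -/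

import Mathlib

open MeasureTheory Filter

/-- Running minimum `min_{k ≤ l} Z k ω`. -/
noncomputable def runMin {Ω : Type*} (Z : ℕ → Ω → ℝ) (l : ℕ) (ω : Ω) : ℝ :=
  (Finset.range (l + 1)).inf' (Finset.nonempty_range_iff.mpr (Nat.succ_ne_zero l))
    (fun k => Z k ω)

/-!
The stopped value `Z_{n+1} · 1{Z_{n+1}^best > η}` is at most `Z_{n+1} · 1{Z_n^best > η}`, since the
running minimum decreases and `Z_{n+1} ≥ 0`. The second indicator is `ℱ n`-measurable, so it can be
pulled out of the conditional expectation, which leaves the drift bound on `{Z_n^best > η}`. There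
the bound is exactly `(1 - δ) (α_n - β_n)`, and `β_n = ε (Z_n - η) ≥ 0`.
-/

section RunMin

variable {Ω : Type*} {Z : ℕ → Ω → ℝ}

lemma runMin_le_of_le {k l : ℕ} (hkl : k ≤ l) (ω : Ω) : runMin Z l ω ≤ Z k ω :=
  Finset.inf'_le _ (Finset.mem_range_succ_iff.2 hkl)

lemma antitone_runMin : Antitone (runMin Z) := fun _ _ hkl _ =>
  Finset.inf'_mono _ (Finset.range_mono (Nat.succ_le_succ hkl)) _

lemma adapted_runMin {m0 : MeasurableSpace Ω} {ℱ : Filtration ℕ m0} (hZ : Adapted ℱ Z) :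
    Adapted ℱ (runMin Z) := by
  intro l
  have hmeas : Measurable[ℱ l]
      ((Finset.range (l + 1)).inf' (Finset.nonempty_range_iff.mpr l.succ_ne_zero) Z) :=
    Finset.inf'_induction _ _ (fun _ hf _ hg => hf.inf hg) fun k hk =>
      (hZ k).mono (ℱ.mono (Finset.mem_range_succ_iff.1 hk)) le_rfl
  convert hmeas using 1
  ext ω
  simp only [runMin, Finset.inf'_apply]

end RunMin

lemma condExp_indicator_le_indicator {Ω E : Type*} {m m0 : MeasurableSpace Ω} {μ : Measure Ω}
    [NormedAddCommGroup E] [NormedSpace ℝ E] [CompleteSpace E] [PartialOrder E]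
    [ClosedIciTopology E] [IsOrderedAddMonoid E] [IsOrderedModule ℝ E] {f g : Ω → E} {s t : Set Ω}
    (hm : m ≤ m0) (hf : Integrable f μ) (hf_nonneg : 0 ≤ᵐ[μ] f) (hs : MeasurableSet[m0] s)
    (ht : MeasurableSet[m] t) (hst : s ⊆ t) (hfg : μ[f | m] ≤ᵐ[μ] g) :
    μ[s.indicator f | m] ≤ᵐ[μ] t.indicator g := by
  have hmono : s.indicator f ≤ᵐ[μ] t.indicator f := by
    filter_upwards [hf_nonneg] with ω hω
    exact Set.indicator_le_indicator_apply_of_subset hst hω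
  calc μ[s.indicator f | m]
      ≤ᵐ[μ] μ[t.indicator f | m] :=
        condExp_mono (hf.indicator hs) (hf.indicator (hm t ht)) hmono
    _ =ᵐ[μ] t.indicator (μ[f | m]) := condExp_indicator hf ht
    _ ≤ᵐ[μ] t.indicator g := by
      filter_upwards [hfg] with ω hω
      exact Set.indicator_le_indicator hω

lemma condExp_indicator_lt_runMin_succ_le {Ω : Type*} {m0 : MeasurableSpace Ω} {μ : Measure Ω}
    {ℱ : Filtration ℕ m0} {Z : ℕ → Ω → ℝ} {g : Ω → ℝ} {n : ℕ} (hadapted : Adapted ℱ Z)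
    (hint : Integrable (Z (n + 1)) μ) (hnonneg : 0 ≤ᵐ[μ] Z (n + 1))
    (hdrift : μ[Z (n + 1) | ℱ n] ≤ᵐ[μ] g) (η : ℝ) :
    μ[{ω | η < runMin Z (n + 1) ω}.indicator (Z (n + 1)) | ℱ n] ≤ᵐ[μ]
      {ω | η < runMin Z n ω}.indicator g := by
  have hmeas (l : ℕ) : MeasurableSet[ℱ l] {ω | η < runMin Z l ω} :=
    adapted_runMin hadapted l measurableSet_Ioi
  exact condExp_indicator_le_indicator (ℱ.le n) hint hnonneg (ℱ.le _ _ (hmeas _)) (hmeas n)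
    (fun ω hω => lt_of_lt_of_le hω (antitone_runMin n.le_succ ω)) hdrift

theorem stopped_process_supermartingale_general
    {Ω : Type*} {m0 : MeasurableSpace Ω} {μ : Measure Ω}
    (ℱ : Filtration ℕ m0) [SigmaFiniteFiltration μ ℱ] (Z : ℕ → Ω → ℝ)
    (hadapted : Adapted ℱ Z)
    (hint : ∀ l, Integrable (Z l) μ)
    (hnonneg : ∀ l ω, 0 ≤ Z l ω)
    (δ ε ζ M : ℝ) (hδ : δ ≠ 1) (hε : 0 < ε)
    (hdrift : ∀ l : ℕ, 1 ≤ l →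
      μ[Z l | ℱ (l - 1)] ≤ᵐ[μ]
        fun ω => (1 - δ) * (1 - ε) * Z (l - 1) ω + (1 - δ) * ζ + δ * M)
    (η : ℝ) (hη : η = (1 / ε) * (ζ + δ * M / (1 - δ)))
    (α β : ℕ → Ω → ℝ)
    (hα : ∀ l ω, α l ω = Z l ω * (if η < runMin Z l ω then 1 else 0))
    (hβ : ∀ l ω, β l ω =
      (ε * Z l ω - ζ - δ * M / (1 - δ)) * (if η < runMin Z l ω then 1 else 0)) :
    (∀ l ω, 0 ≤ α l ω) ∧ (∀ l ω, 0 ≤ β l ω) ∧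
      ∀ l : ℕ, 1 ≤ l →
        μ[α l | ℱ (l - 1)] ≤ᵐ[μ]
          fun ω => (1 - δ) * (α (l - 1) ω - β (l - 1) ω) := by
  have h1δ : 1 - δ ≠ 0 := sub_ne_zero.2 hδ.symm
  have hα_indicator (l : ℕ) : α l = {ω | η < runMin Z l ω}.indicator (Z l) := by
    ext ω
    simp [hα, Set.indicator_apply]
  have hβ_indicator (l : ℕ) :
      β l = {ω | η < runMin Z l ω}.indicator fun ω => ε * (Z l ω - η) := by
    have hεη : ε * η = ζ + δ * M / (1 - δ) := by rw [hη]; field_simp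
    ext ω
    simp [hβ, Set.indicator_apply, mul_sub, hεη, sub_sub]
  refine ⟨fun l ω => ?_, fun l ω => ?_, fun l hl => ?_⟩
  · rw [hα_indicator]
    exact Set.indicator_nonneg (fun ω _ => hnonneg l ω) ω
  · rw [hβ_indicator]
    exact Set.indicator_nonneg (fun ω hω =>
      mul_nonneg hε.le (sub_nonneg.2 (hω.le.trans (runMin_le_of_le le_rfl ω)))) ω
  · obtain ⟨n, rfl⟩ := Nat.exists_eq_add_of_le' hl
    have hstopped := condExp_indicator_lt_runMin_succ_le hadapted (hint (n + 1))
      (.of_forall (hnonneg (n + 1))) (hdrift (n + 1) hl) η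
    rw [← hα_indicator] at hstopped
    refine hstopped.trans_eq (.of_forall fun ω => ?_)
    have hdrift_eq : (1 - δ) * (1 - ε) * Z n ω + (1 - δ) * ζ + δ * M =
        (1 - δ) * (Z n ω - (ε * Z n ω - ζ - δ * M / (1 - δ))) := by
      field_simp
      ring
    by_cases h : η < runMin Z n ω <;> simp [hα, hβ, h, hdrift_eq]

/-- Stopped-process supermartingale construction: with `η = (1/ε)(ζ + δM/(1−δ))`,
`α_l = Z_l·1{Z_l^best > η}` and `β_l = (εZ_l − ζ − δM/(1−δ))·1{Z_l^best > η}`, both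
processes are nonnegative and `E[α_l ∣ ℱ_{l−1}] ≤ (1−δ)(α_{l−1} − β_{l−1})` a.s. -/
theorem stopped_process_supermartingale
    {Ω : Type*} {m0 : MeasurableSpace Ω} {μ : Measure Ω} [IsProbabilityMeasure μ]
    (ℱ : Filtration ℕ m0) (Z : ℕ → Ω → ℝ)
    (hadapted : Adapted ℱ Z)
    (hint : ∀ l, Integrable (Z l) μ)
    (hnonneg : ∀ l ω, 0 ≤ Z l ω)
    (δ ε ζ M : ℝ) (hδ : δ ∈ Set.Ioo (0 : ℝ) 1) (hε : ε ∈ Set.Ioo (0 : ℝ) 1)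
    (hζ : 0 ≤ ζ) (hM : 0 ≤ M)
    (hdrift : ∀ l : ℕ, 1 ≤ l →
      μ[Z l | ℱ (l - 1)] ≤ᵐ[μ]
        fun ω => (1 - δ) * (1 - ε) * Z (l - 1) ω + (1 - δ) * ζ + δ * M)
    (η : ℝ) (hη : η = (1 / ε) * (ζ + δ * M / (1 - δ)))
    (α β : ℕ → Ω → ℝ)
    (hα : ∀ l ω, α l ω = Z l ω * (if η < runMin Z l ω then 1 else 0))
    (hβ : ∀ l ω, β l ω =
      (ε * Z l ω - ζ - δ * M / (1 - δ)) * (if η < runMin Z l ω then 1 else 0)) :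
    (∀ l ω, 0 ≤ α l ω) ∧ (∀ l ω, 0 ≤ β l ω) ∧
      ∀ l : ℕ, 1 ≤ l →
        μ[α l | ℱ (l - 1)] ≤ᵐ[μ]
          fun ω => (1 - δ) * (α (l - 1) ω - β (l - 1) ω) :=
  stopped_process_supermartingale_general ℱ Z hadapted hint hnonneg δ ε ζ M hδ.2.ne hε.1 hdrift
    η hη α β hα hβ
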